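/- Let H be a real Hilbert space and A : H → H a continuous self-adjoint linear operator that is positive (⟪x, A x⟫ ≥ 0 for all x) and invertible with continuous inverse. If Φ : ℝ → H is twice differentiable with Φ''(t) = −A(Φ(t)) for all t, then there exists a constant C, depending only on Φ(0) and Φ'(0), such that for all t ∈ ℝ: ‖Φ(t)‖ ≤ C, ‖Φ'(t)‖ ≤ C, and ‖A(Φ(t))‖ ≤ C. -/

import Mathlib

open scoped InnerProductSpace

/-!
The energy `‖Φ'‖² + ⟪A Φ, Φ⟫` is conserved. Since `A` is positive, it controls `‖Φ'‖` at once, and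
Cauchy–Schwarz for the form `⟪A x, y⟫` gives `‖A Φ‖² ≤ ‖A‖ ⟪A Φ, Φ⟫`, so it controls `‖A Φ‖` as
well; a bounded inverse then passes from `‖A Φ‖` to `‖Φ‖`.
-/

open scoped NNReal

section PositiveOperator

variable {𝕜 E : Type*} [RCLike 𝕜] [NormedAddCommGroup E] [InnerProductSpace 𝕜 E]

theorem norm_inner_apply_sq_le_of_isPositive {T : E →ₗ[𝕜] E} (hT : T.IsPositive) (x y : E) :
    ‖⟪T x, y⟫_𝕜‖ ^ 2 ≤ RCLike.re ⟪T x, x⟫_𝕜 * RCLike.re ⟪T y, y⟫_𝕜 := by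
  let form : PreInnerProductSpace.Core 𝕜 E :=
    { inner u v := ⟪T u, v⟫_𝕜
      conj_inner_symm u v := by rw [inner_conj_symm, hT.isSymmetric]
      re_inner_nonneg := hT.re_inner_nonneg_left
      add_left u v w := by rw [map_add, inner_add_left]
      smul_left u v r := by rw [map_smul, inner_smul_left] }
  have cauchy_schwarz : ‖⟪T x, y⟫_𝕜‖ * ‖⟪T y, x⟫_𝕜‖ ≤
      RCLike.re ⟪T x, x⟫_𝕜 * RCLike.re ⟪T y, y⟫_𝕜 :=
    InnerProductSpace.Core.inner_mul_inner_self_le (c := form) x y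
  rwa [hT.isSymmetric y x, norm_inner_symm y (T x), ← sq] at cauchy_schwarz

theorem norm_apply_sq_le_opNorm_mul_reApplyInnerSelf {T : E →L[𝕜] E} (hT : T.IsPositive) (x : E) :
    ‖T x‖ ^ 2 ≤ ‖T‖ * T.reApplyInnerSelf x := by
  rcases (sq_nonneg ‖T x‖).eq_or_lt with hzero | hpos
  · rw [← hzero]
    exact mul_nonneg (norm_nonneg T) (hT.2 x)
  have hself : RCLike.re ⟪T (T x), T x⟫_𝕜 ≤ ‖T‖ * ‖T x‖ ^ 2 :=
    calc RCLike.re ⟪T (T x), T x⟫_𝕜 ≤ ‖T (T x)‖ * ‖T x‖ := re_inner_le_norm _ _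
      _ ≤ ‖T‖ * ‖T x‖ * ‖T x‖ := by gcongr; exact T.le_opNorm _
      _ = ‖T‖ * ‖T x‖ ^ 2 := by ring
  refine le_of_mul_le_mul_right ?_ hpos
  calc ‖T x‖ ^ 2 * ‖T x‖ ^ 2 = ‖⟪T x, T x⟫_𝕜‖ ^ 2 := by
        rw [inner_self_eq_norm_sq_to_K, norm_pow, RCLike.norm_ofReal, abs_norm, ← sq]
    _ ≤ T.reApplyInnerSelf x * RCLike.re ⟪T (T x), T x⟫_𝕜 :=
        norm_inner_apply_sq_le_of_isPositive hT.toLinearMap x (T x)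
    _ ≤ T.reApplyInnerSelf x * (‖T‖ * ‖T x‖ ^ 2) := mul_le_mul_of_nonneg_left hself (hT.2 x)
    _ = ‖T‖ * T.reApplyInnerSelf x * ‖T x‖ ^ 2 := by ring

end PositiveOperator

section WaveEquation

variable {H : Type*} [NormedAddCommGroup H] [InnerProductSpace ℝ H]

/-- Twice the usual (kinetic plus potential) energy of a state of the wave equation `Φ'' = -A Φ`
with position `u = Φ t` and velocity `v = Φ' t`. -/
noncomputable def waveEnergy (A : H →L[ℝ] H) (u v : H) : ℝ :=
  ‖v‖ ^ 2 + A.reApplyInnerSelf u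

variable {A : H →L[ℝ] H} {u v : H}

theorem norm_velocity_le_sqrt_waveEnergy (hA : A.IsPositive) : ‖v‖ ≤ √(waveEnergy A u v) :=
  Real.le_sqrt_of_sq_le (le_add_of_nonneg_right (hA.2 u))

theorem norm_apply_le_sqrt_waveEnergy (hA : A.IsPositive) :
    ‖A u‖ ≤ √(‖A‖ * waveEnergy A u v) :=
  Real.le_sqrt_of_sq_le <|
    (norm_apply_sq_le_opNorm_mul_reApplyInnerSelf hA u).trans <|
      mul_le_mul_of_nonneg_left (le_add_of_nonneg_left (sq_nonneg ‖v‖)) (norm_nonneg A)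

variable {Φ Φ' : ℝ → H}

theorem hasDerivAt_waveEnergy {t : ℝ} (hA : A.IsSymmetric) (hΦ : HasDerivAt Φ (Φ' t) t)
    (hΦ' : HasDerivAt Φ' (-(A (Φ t))) t) :
    HasDerivAt (fun s ↦ waveEnergy A (Φ s) (Φ' s)) 0 t := by
  have kinetic : HasDerivAt (fun s ↦ ‖Φ' s‖ ^ 2) (2 * ⟪Φ' t, -(A (Φ t))⟫_ℝ) t := hΦ'.norm_sq
  have potential : HasDerivAt (fun s ↦ A.reApplyInnerSelf (Φ s)) (2 * ⟪A (Φ t), Φ' t⟫_ℝ) t :=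
    ((hA.hasStrictFDerivAt_reApplyInnerSelf (Φ t)).hasFDerivAt.comp_hasDerivAt t hΦ).congr_deriv
      (by simp)
  refine (kinetic.add potential).congr_deriv ?_
  rw [inner_neg_right, real_inner_comm]
  ring

theorem waveEnergy_const (hA : A.IsSymmetric) (hΦ : ∀ t, HasDerivAt Φ (Φ' t) t)
    (hΦ' : ∀ t, HasDerivAt Φ' (-(A (Φ t))) t) (t₁ t₂ : ℝ) :
    waveEnergy A (Φ t₁) (Φ' t₁) = waveEnergy A (Φ t₂) (Φ' t₂) :=
  have deriv_zero s := hasDerivAt_waveEnergy hA (hΦ s) (hΦ' s)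
  is_const_of_deriv_eq_zero (fun s ↦ (deriv_zero s).differentiableAt)
    (fun s ↦ (deriv_zero s).deriv) t₁ t₂

theorem stmt_4_general {K : ℝ≥0} (hA : A.IsPositive) (hK : AntilipschitzWith K A) :
    ∃ C : H → H → ℝ, ∀ Φ Φ' : ℝ → H, (∀ t, HasDerivAt Φ (Φ' t) t) →
      (∀ t, HasDerivAt Φ' (-(A (Φ t))) t) → ∀ t,
        ‖Φ t‖ ≤ C (Φ 0) (Φ' 0) ∧ ‖Φ' t‖ ≤ C (Φ 0) (Φ' 0) ∧ ‖A (Φ t)‖ ≤ C (Φ 0) (Φ' 0) := by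
  refine ⟨fun u v ↦ max (K * √(‖A‖ * waveEnergy A u v))
    (max (√(waveEnergy A u v)) (√(‖A‖ * waveEnergy A u v))), fun Φ Φ' hΦ hΦ' t ↦ ?_⟩
  have conserved := waveEnergy_const hA.isSymmetric hΦ hΦ' t 0
  have velocity_le : ‖Φ' t‖ ≤ √(waveEnergy A (Φ 0) (Φ' 0)) :=
    conserved ▸ norm_velocity_le_sqrt_waveEnergy hA
  have image_le : ‖A (Φ t)‖ ≤ √(‖A‖ * waveEnergy A (Φ 0) (Φ' 0)) :=
    conserved ▸ norm_apply_le_sqrt_waveEnergy hA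
  have position_le : ‖Φ t‖ ≤ K * √(‖A‖ * waveEnergy A (Φ 0) (Φ' 0)) :=
    (hK.le_mul_norm (map_zero A) (Φ t)).trans (mul_le_mul_of_nonneg_left image_le K.coe_nonneg)
  exact ⟨le_max_of_le_left position_le, le_max_of_le_right (le_max_of_le_left velocity_le),
    le_max_of_le_right (le_max_of_le_right image_le)⟩

end WaveEquation

/-- Abstract core of Theorem 2: for the wave equation `Φ'' = -A Φ` with `A` a continuous,
self-adjoint, positive, boundedly invertible operator on a real Hilbert space, the norms
`‖Φ(t)‖`, `‖Φ'(t)‖` and `‖A(Φ(t))‖` are uniformly bounded in `t` by a constant depending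
only on the initial datum `(Φ(0), Φ'(0))`. -/
theorem stmt_4 {H : Type*} [NormedAddCommGroup H] [InnerProductSpace ℝ H] [CompleteSpace H]
    (A B : H →L[ℝ] H) (hA : ∀ x y : H, ⟪A x, y⟫_ℝ = ⟪x, A y⟫_ℝ)
    (hpos : ∀ x : H, 0 ≤ ⟪x, A x⟫_ℝ)
    (hBA : ∀ x : H, B (A x) = x) (hAB : ∀ x : H, A (B x) = x)
    (Φ Φ' Φ'' : ℝ → H)
    (hΦ : ∀ t, HasDerivAt Φ (Φ' t) t)
    (hΦ' : ∀ t, HasDerivAt Φ' (Φ'' t) t)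
    (hwave : ∀ t, Φ'' t = -(A (Φ t))) :
    ∃ C : ℝ, ∀ t : ℝ, ‖Φ t‖ ≤ C ∧ ‖Φ' t‖ ≤ C ∧ ‖A (Φ t)‖ ≤ C := by
  have hApos : A.IsPositive := A.isPositive_iff.2 ⟨hA, fun x ↦ (hpos x).trans_eq (hA x x).symm⟩
  obtain ⟨C, hC⟩ := stmt_4_general hApos (B.lipschitz.to_rightInverse hBA)
  exact ⟨C (Φ 0) (Φ' 0), hC Φ Φ' hΦ fun t ↦ hwave t ▸ hΦ' t⟩
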